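/- arXiv:2310.09920 — 3 statements merged into one kernel-verified Lean document; each statement's English description precedes it below -/
import Mathlib

section
/- (Theorem 1 of the paper.) Let p > 0, γ ≥ 0, u_max > 0, and Q^d_max ≥ p be real numbers, and suppose 0 < V ≤ (Q^d_max − p)·p/(u_max + γ·p). Let T_k ≥ 0, and let the download buffer evolve as Q^d(0) = 0, Q^d(k+1) = max(Q^d(k) − T_k, 0) + a_k with a_k ∈ {0, p}, where the download indicator is governed by the BONES rule: a_k = p only if there exist options i, j with segment size S_i > 0, processing time t^e(i,j) ≥ 0, utility U_k(i,j) ≤ u_max, and current enhancement buffer level Q^e(k) ≥ 0, such that Q^d(k)·p + Q^e(k)·t^e(i,j) − V·(U_k(i,j) + γ·p) ≤ 0. Then for all k, Q^d(k) ≤ V·(u_max + γ·p)/p + p, and in particular Q^d(k) ≤ Q^d_max. -/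
/-!
A nonpositive score bounds the buffer level before a download by `B = V (umax + γ p) / p`, because
the enhancement term can only raise the score and `U ≤ umax`. One slot adds at most `p`, and slots
without a download add nothing, so `Qd ≤ B + p` is an invariant. The condition on `V` is precisely
`B + p ≤ Qdmax`.
-/

section Buffer

variable {G : Type*} [AddCommGroup G] [LinearOrder G] [IsOrderedAddMonoid G]

theorem buffer_step_le_add {B p q τ d : G} (hB : 0 ≤ B) (hp : 0 ≤ p) (hτ : 0 ≤ τ)
    (hd : d ≤ p) (hthreshold : 0 < d → q ≤ B) (hq : q ≤ B + p) :
    max (q - τ) 0 + d ≤ B + p := by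
  have hdrain : q - τ ≤ q := sub_le_self q hτ
  rcases le_or_gt d 0 with hidle | hdownload
  · calc
      max (q - τ) 0 + d ≤ max (q - τ) 0 := add_le_of_nonpos_right hidle
      _ ≤ B + p := max_le (hdrain.trans hq) (add_nonneg hB hp)
  · exact add_le_add (max_le (hdrain.trans (hthreshold hdownload)) hB) hd

theorem buffer_le_add_of_threshold {B p : G} {T a Q : ℕ → G} (hB : 0 ≤ B) (hp : 0 ≤ p)
    (hT : ∀ k, 0 ≤ T k) (ha : ∀ k, a k ≤ p) (hQ0 : Q 0 ≤ B + p)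
    (hQ : ∀ k, Q (k + 1) = max (Q k - T k) 0 + a k)
    (hthreshold : ∀ k, 0 < a k → Q k ≤ B) (k : ℕ) :
    Q k ≤ B + p := by
  induction k with
  | zero => exact hQ0
  | succ k ih =>
    rw [hQ k]
    exact buffer_step_le_add hB hp (hT k) (ha k) (hthreshold k) ih

end Buffer

section Score

variable {K : Type*} [Field K] [LinearOrder K] [IsStrictOrderedRing K]

theorem le_div_of_score_nonpos {p γ umax V q e t u : K} (hp : 0 < p) (hV : 0 ≤ V)
    (he : 0 ≤ e) (ht : 0 ≤ t) (hu : u ≤ umax) (hscore : q * p + e * t - V * (u + γ * p) ≤ 0) :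
    q ≤ V * (umax + γ * p) / p := by
  rw [le_div_iff₀ hp]
  calc
    q * p ≤ q * p + e * t := le_add_of_nonneg_right (mul_nonneg he ht)
    _ ≤ V * (u + γ * p) := sub_nonpos.mp hscore
    _ ≤ V * (umax + γ * p) := by gcongr

theorem mul_div_add_le_iff_le_div {p c V Qmax : K} (hp : 0 < p) (hc : 0 < c) :
    V * c / p + p ≤ Qmax ↔ V ≤ (Qmax - p) * p / c := by
  rw [← le_sub_iff_add_le, div_le_iff₀ hp, le_div_iff₀ hc]

theorem bones_buffer_bound_general {I J : Type*} {p γ umax Qdmax V : K}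
    {T a Qd Qe : ℕ → K} {te U : ℕ → I → J → K}
    (hp : 0 < p) (hutility : 0 < umax + γ * p)
    (hV : 0 ≤ V) (hVub : V ≤ (Qdmax - p) * p / (umax + γ * p))
    (hT : ∀ k, 0 ≤ T k) (ha : ∀ k, a k ≤ p)
    (hte : ∀ k i j, 0 ≤ te k i j) (hU : ∀ k i j, U k i j ≤ umax) (hQe : ∀ k, 0 ≤ Qe k)
    (hQd0 : Qd 0 ≤ V * (umax + γ * p) / p + p)
    (hQd : ∀ k, Qd (k + 1) = max (Qd k - T k) 0 + a k)
    (hrule : ∀ k, 0 < a k →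
      ∃ i j, Qd k * p + Qe k * te k i j - V * (U k i j + γ * p) ≤ 0) (k : ℕ) :
    Qd k ≤ V * (umax + γ * p) / p + p ∧ Qd k ≤ Qdmax := by
  have hB : 0 ≤ V * (umax + γ * p) / p := by positivity
  have hthreshold (n : ℕ) (hdownload : 0 < a n) : Qd n ≤ V * (umax + γ * p) / p := by
    obtain ⟨i, j, hscore⟩ := hrule n hdownload
    exact le_div_of_score_nonpos hp hV (hQe n) (hte n i j) (hU n i j) hscore
  have hbound : Qd k ≤ V * (umax + γ * p) / p + p :=
    buffer_le_add_of_threshold hB hp.le hT ha hQd0 hQd hthreshold k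
  exact ⟨hbound, hbound.trans ((mul_div_add_le_iff_le_div hp hutility).mpr hVub)⟩

end Score

/-- Theorem 1 of the paper: Under the BONES download rule (a download occurs in
slot `k` only if some option `(i, j)` has nonpositive drift-plus-penalty score
`Q^d(k)·p + Q^e(k)·t^e(i,j) - V·(U_k(i,j) + γ·p) ≤ 0`), and with
`0 < V ≤ (Q^d_max - p)·p / (u_max + γ·p)`, the download buffer satisfies
`Q^d(k) ≤ V·(u_max + γ·p)/p + p ≤ Q^d_max` for all `k`. -/
theorem bones_buffer_bound
    (I J : ℕ) (p γ umax Qdmax V : ℝ)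
    (T a Qd Qe : ℕ → ℝ)
    (S : Fin I → ℝ) (te : Fin I → Fin J → ℝ) (U : ℕ → Fin I → Fin J → ℝ)
    (hp : 0 < p) (hγ : 0 ≤ γ) (humax : 0 < umax) (hQdmax : p ≤ Qdmax)
    (hV : 0 < V) (hVub : V ≤ (Qdmax - p) * p / (umax + γ * p))
    (hT : ∀ k, 0 ≤ T k)
    (ha : ∀ k, a k = 0 ∨ a k = p)
    (hS : ∀ i, 0 < S i) (hte : ∀ i j, 0 ≤ te i j)
    (hU : ∀ k i j, U k i j ≤ umax) (hQe : ∀ k, 0 ≤ Qe k)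
    (hQd0 : Qd 0 = 0)
    (hQd : ∀ k, Qd (k + 1) = max (Qd k - T k) 0 + a k)
    (hrule : ∀ k, a k = p →
      ∃ i j, Qd k * p + Qe k * te i j - V * (U k i j + γ * p) ≤ 0) :
    ∀ k, Qd k ≤ V * (umax + γ * p) / p + p ∧ Qd k ≤ Qdmax := by
  exact bones_buffer_bound_general hp (by positivity) hV.le hVub hT
    (fun k => (ha k).elim (·.trans_le hp.le) Eq.le) (fun _ => hte) hU hQe
    (by rw [hQd0]; positivity) hQd (fun k hk => hrule k ((ha k).resolve_left hk.ne'))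
end

section
/- Let p > 0, t^e_max ≥ 0, and 0 < T_min ≤ T_max be real numbers. Let Q^d, Q^e : ℕ → ℝ satisfy Q^d(k), Q^e(k) ≥ 0, Q^d(k+1) = max(Q^d(k) − T_k, 0) + a_k, and Q^e(k+1) = max(Q^e(k) − T_k, 0) + b_k, where 0 ≤ a_k ≤ p, 0 ≤ b_k ≤ t^e_max, and T_min ≤ T_k ≤ T_max for all k. Define the Lyapunov function L(k) = (1/2)·(Q^d(k)^2 + Q^e(k)^2). Then for all k: (L(k+1) − L(k))/T_k ≤ (p^2 + (t^e_max)^2 + 2·T_min·T_max)/(2·T_min) + (Q^d(k)·(a_k − T_k) + Q^e(k)·(b_k − T_k))/T_k. -/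
/-!
For a single queue, `max (q - t) 0` is at most `q` and its square is at most `(q - t) ^ 2`, so the
square of the queue grows in one slot by at most `x ^ 2 + t ^ 2 + 2 * (q * (x - t))`. Summed over
the queues, halved and divided by the slot duration `t`, the second-order terms become a multiple
of `1 / t` plus a multiple of `t`; the first is largest at `t = Tmin`, the second at `t = Tmax`.
-/

namespace BufferQueue

section Ring

variable {R : Type*} [CommRing R] [LinearOrder R]

/-- One slot of the Lindley recursion: a backlog `q` is drained by `t`, but not below zero, and
then receives the arrival `x`. -/
def step (q t x : R) : R :=
  max (q - t) 0 + x

lemma sq_step_le [IsStrictOrderedRing R] {q t x : R} (hq : 0 ≤ q) (ht : 0 ≤ t) (hx : 0 ≤ x) :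
    step q t x ^ 2 ≤ q ^ 2 + (x ^ 2 + t ^ 2) + 2 * (q * (x - t)) := by
  have hmax_le : max (q - t) 0 ≤ q := max_le (sub_le_self q ht) hq
  have hmax_sq : max (q - t) 0 ^ 2 ≤ (q - t) ^ 2 :=
    sq_le_sq.mpr (abs_max_le_max_abs_abs.trans_eq (by simp))
  calc step q t x ^ 2
      = max (q - t) 0 ^ 2 + 2 * (max (q - t) 0 * x) + x ^ 2 := by rw [step]; ring
    _ ≤ (q - t) ^ 2 + 2 * (q * x) + x ^ 2 := by gcongr
    _ = q ^ 2 + (x ^ 2 + t ^ 2) + 2 * (q * (x - t)) := by ring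

end Ring

variable {ι 𝕜 : Type*} [Fintype ι] [Field 𝕜]

/-- The quadratic Lyapunov function of a finite family of queues with backlogs `Q`. -/
def lyapunov (Q : ι → 𝕜) : 𝕜 :=
  (∑ i, Q i ^ 2) / 2

variable [LinearOrder 𝕜] [IsStrictOrderedRing 𝕜]

lemma lyapunov_step_sub_le {Q t x : ι → 𝕜} (hQ : ∀ i, 0 ≤ Q i) (ht : ∀ i, 0 ≤ t i)
    (hx : ∀ i, 0 ≤ x i) :
    lyapunov (fun i ↦ step (Q i) (t i) (x i)) - lyapunov Q
      ≤ (∑ i, x i ^ 2 + ∑ i, t i ^ 2) / 2 + ∑ i, Q i * (x i - t i) := by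
  have hsum : ∑ i, step (Q i) (t i) (x i) ^ 2
      ≤ ∑ i, Q i ^ 2 + (∑ i, x i ^ 2 + ∑ i, t i ^ 2) + 2 * ∑ i, Q i * (x i - t i) := by
    simpa only [Finset.sum_add_distrib, Finset.mul_sum] using
      Finset.sum_le_sum fun i _ ↦ sq_step_le (hQ i) (ht i) (hx i)
  unfold lyapunov
  linarith

lemma add_mul_sq_div_le {A n t Tmin Tmax : 𝕜} (hA : 0 ≤ A) (hn : 0 ≤ n) (hTmin : 0 < Tmin)
    (hmin : Tmin ≤ t) (hmax : t ≤ Tmax) :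
    (A + n * t ^ 2) / 2 / t ≤ (A + n * Tmin * Tmax) / (2 * Tmin) := by
  have ht : 0 < t := hTmin.trans_le hmin
  calc (A + n * t ^ 2) / 2 / t
      = A / (2 * t) + n * t / 2 := by field_simp
    _ ≤ A / (2 * Tmin) + n * Tmax / 2 := by gcongr
    _ = (A + n * Tmin * Tmax) / (2 * Tmin) := by field_simp

end BufferQueue

open BufferQueue in
theorem bones_normalized_drift_bound_general {ι 𝕜 : Type*} [Fintype ι] [Field 𝕜] [LinearOrder 𝕜]
    [IsStrictOrderedRing 𝕜] {Q x c : ι → 𝕜} {t Tmin Tmax : 𝕜} (hTmin : 0 < Tmin)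
    (hQ : ∀ i, 0 ≤ Q i) (hx : ∀ i, 0 ≤ x i ∧ x i ≤ c i) (ht : Tmin ≤ t ∧ t ≤ Tmax) :
    (lyapunov (fun i ↦ step (Q i) t (x i)) - lyapunov Q) / t
      ≤ (∑ i, c i ^ 2 + Fintype.card ι * Tmin * Tmax) / (2 * Tmin)
        + (∑ i, Q i * (x i - t)) / t := by
  have ht_pos : 0 < t := hTmin.trans_le ht.1
  have hsq : ∑ i, x i ^ 2 ≤ ∑ i, c i ^ 2 :=
    Finset.sum_le_sum fun i _ ↦ pow_le_pow_left₀ (hx i).1 (hx i).2 2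
  have hdrift : lyapunov (fun i ↦ step (Q i) t (x i)) - lyapunov Q
      ≤ (∑ i, x i ^ 2 + Fintype.card ι * t ^ 2) / 2 + ∑ i, Q i * (x i - t) := by
    simpa using lyapunov_step_sub_le hQ (fun _ ↦ ht_pos.le) fun i ↦ (hx i).1
  calc (lyapunov (fun i ↦ step (Q i) t (x i)) - lyapunov Q) / t
      ≤ ((∑ i, c i ^ 2 + Fintype.card ι * t ^ 2) / 2 + ∑ i, Q i * (x i - t)) / t := by
        gcongr
        exact hdrift.trans (by gcongr)
    _ = (∑ i, c i ^ 2 + Fintype.card ι * t ^ 2) / 2 / t + (∑ i, Q i * (x i - t)) / t :=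
        add_div ..
    _ ≤ (∑ i, c i ^ 2 + Fintype.card ι * Tmin * Tmax) / (2 * Tmin)
        + (∑ i, Q i * (x i - t)) / t :=
        add_le_add_left (add_mul_sq_div_le (Finset.sum_nonneg fun i _ ↦ sq_nonneg (c i))
          (Nat.cast_nonneg _) hTmin ht.1 ht.2) _

/-- Normalized two-queue quadratic Lyapunov drift bound for the BONES buffers,
with drift constant `(p^2 + (t^e_max)^2 + 2·T_min·T_max) / (2·T_min)`. -/
theorem bones_normalized_drift_bound
    (p teMax Tmin Tmax : ℝ) (T a b Qd Qe : ℕ → ℝ)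
    (hp : 0 < p) (hteMax : 0 ≤ teMax)
    (hTmin : 0 < Tmin) (hTminmax : Tmin ≤ Tmax)
    (hQd : ∀ k, 0 ≤ Qd k) (hQe : ∀ k, 0 ≤ Qe k)
    (hQdrec : ∀ k, Qd (k + 1) = max (Qd k - T k) 0 + a k)
    (hQerec : ∀ k, Qe (k + 1) = max (Qe k - T k) 0 + b k)
    (ha : ∀ k, 0 ≤ a k ∧ a k ≤ p)
    (hb : ∀ k, 0 ≤ b k ∧ b k ≤ teMax)
    (hT : ∀ k, Tmin ≤ T k ∧ T k ≤ Tmax)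
    (L : ℕ → ℝ) (hL : ∀ k, L k = (1 / 2) * (Qd k ^ 2 + Qe k ^ 2)) :
    ∀ k, (L (k + 1) - L k) / T k
      ≤ (p ^ 2 + teMax ^ 2 + 2 * Tmin * Tmax) / (2 * Tmin)
        + (Qd k * (a k - T k) + Qe k * (b k - T k)) / T k := by
  intro k
  simpa [BufferQueue.lyapunov, BufferQueue.step, hL, hQdrec, hQerec, div_eq_inv_mul] using
    bones_normalized_drift_bound_general (Q := ![Qd k, Qe k]) (x := ![a k, b k]) (c := ![p, teMax])
      hTmin (Fin.forall_fin_two.mpr ⟨hQd k, hQe k⟩) (Fin.forall_fin_two.mpr ⟨ha k, hb k⟩) (hT k)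
end

section
/- (Deterministic sample-path form of Theorem 2.) Let p > 0, t^e_max ≥ 0, 0 < T_min ≤ T_max, V > 0, γ ≥ 0, and real numbers ū*, s̄* be given, and set B = (p^2 + (t^e_max)^2 + 2·T_min·T_max)/(2·T_min). Let Q^d, Q^e : ℕ → ℝ satisfy Q^d(0) = Q^e(0) = 0, Q^d(k+1) = max(Q^d(k) − T_k, 0) + a_k, and Q^e(k+1) = max(Q^e(k) − T_k, 0) + b_k, with 0 ≤ a_k ≤ p, 0 ≤ b_k ≤ t^e_max, and T_min ≤ T_k ≤ T_max for all k. Let u_k denote the utility collected in slot k, and suppose that in every slot k the chosen decision satisfies the per-slot drift-plus-penalty guarantee: Q^d(k)·(a_k − T_k) + Q^e(k)·(b_k − T_k) − V·(u_k + γ·a_k) ≤ T_k·(B·0 + (−V)·(ū* + γ·s̄*)) , i.e., [Q^d(k)·(a_k − T_k) + Q^e(k)·(b_k − T_k) − V·(u_k + γ·a_k)]/T_k ≤ −V·(ū* + γ·s̄*). Then for every K ≥ 1, (Σ_{k=0}^{K−1} (u_k + γ·a_k))/(Σ_{k=0}^{K−1} T_k) ≥ ū* + γ·s̄* − B/V.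 -/
/-!
Take half the sum of the squared backlogs as a Lyapunov function `L`. Squaring the recursion of a
queue, one slot of duration `t` raises `L` by at most the second-order terms `∑ i, (t² + xᵢ²) / 2`
plus the linear term `∑ i, Qᵢ (xᵢ - t)`. Since `t` lies in `[Tmin, Tmax]`, the former is at most
`B t`; the drift-plus-penalty guarantee controls the latter by `V r - V ρ t`, with `r` the reward of
the slot and `ρ` the target rate. Summing over the slots telescopes `L`, and `L ≥ 0` at the end
leaves `V ∑ r ≥ (V ρ - B) ∑ t - L(0)`.
-/

/-- The backlog after a slot of duration `t` that starts with backlog `q`: the queue drains at unit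
rate until it is empty, and the arrival `x` is added at the end of the slot. -/
def queueUpdate (q t x : ℝ) : ℝ :=
  max (q - t) 0 + x

lemma queueUpdate_nonneg {x : ℝ} (q t : ℝ) (hx : 0 ≤ x) : 0 ≤ queueUpdate q t x :=
  add_nonneg (le_max_right _ _) hx

lemma queue_nonneg {Q T x : ℕ → ℝ} (h0 : 0 ≤ Q 0)
    (hrec : ∀ k, Q (k + 1) = queueUpdate (Q k) (T k) (x k)) (hx : ∀ k, 0 ≤ x k) :
    ∀ k, 0 ≤ Q k
  | 0 => h0
  | k + 1 => (queueUpdate_nonneg (Q k) (T k) (hx k)).trans_eq (hrec k).symm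

lemma queueUpdate_sq_le {q t x : ℝ} (hq : 0 ≤ q) (ht : 0 ≤ t) (hx : 0 ≤ x) :
    queueUpdate q t x ^ 2 ≤ q ^ 2 + (t ^ 2 + x ^ 2) + 2 * (q * (x - t)) := by
  have hmax_le : max (q - t) 0 ≤ q := max_le (sub_le_self q ht) hq
  have hmax_sq : max (q - t) 0 ^ 2 ≤ (q - t) ^ 2 :=
    (pow_le_pow_left₀ (le_max_right _ _)
      (max_le (le_abs_self (q - t)) (abs_nonneg (q - t))) 2).trans_eq (sq_abs (q - t))
  calc queueUpdate q t x ^ 2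
      = max (q - t) 0 ^ 2 + 2 * (max (q - t) 0 * x) + x ^ 2 := by rw [queueUpdate]; ring
    _ ≤ (q - t) ^ 2 + 2 * (q * x) + x ^ 2 := by gcongr
    _ = q ^ 2 + (t ^ 2 + x ^ 2) + 2 * (q * (x - t)) := by ring

lemma sub_div_sub_div_le_div {V S R ρ B L : ℝ} (hV : 0 < V) (hS : 0 < S)
    (h : (V * ρ - B) * S - L ≤ V * R) : ρ - B / V - L / (V * S) ≤ R / S := by
  calc ρ - B / V - L / (V * S)
      = ((V * ρ - B) * S - L) / (V * S) := by field_simp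
    _ ≤ V * R / (V * S) := by gcongr
    _ = R / S := mul_div_mul_left R S hV.ne'

section Queues

variable {ι : Type*} [Fintype ι]

/-- The quadratic Lyapunov function `L = (∑ i, Qᵢ²) / 2` of a finite family of backlogs. -/
noncomputable def quadraticLyapunov (q : ι → ℝ) : ℝ :=
  (∑ i, q i ^ 2) / 2

/-- The normalized drift constant `B` of queues whose arrivals per slot are bounded by `c i` and
whose slot durations lie in `[Tmin, Tmax]`: it bounds the second-order part of the Lyapunov drift
per unit of time. For the two buffers of BONES the cardinality is the factor `2` in the term
`2 * Tmin * Tmax`. -/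
noncomputable def driftConstant (c : ι → ℝ) (Tmin Tmax : ℝ) : ℝ :=
  (∑ i, c i ^ 2 + Fintype.card ι * Tmin * Tmax) / (2 * Tmin)

lemma quadraticLyapunov_nonneg (q : ι → ℝ) : 0 ≤ quadraticLyapunov q :=
  div_nonneg (Finset.sum_nonneg fun i _ => sq_nonneg (q i)) zero_le_two

lemma quadraticLyapunov_queueUpdate_sub_le {q x : ι → ℝ} {t : ℝ}
    (hq : ∀ i, 0 ≤ q i) (ht : 0 ≤ t) (hx : ∀ i, 0 ≤ x i) :
    quadraticLyapunov (fun i => queueUpdate (q i) t (x i)) - quadraticLyapunov q ≤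
      (∑ i, (t ^ 2 + x i ^ 2)) / 2 + ∑ i, q i * (x i - t) := by
  have hsum : ∑ i, queueUpdate (q i) t (x i) ^ 2 ≤
      ∑ i, q i ^ 2 + ∑ i, (t ^ 2 + x i ^ 2) + 2 * ∑ i, q i * (x i - t) := by
    rw [Finset.mul_sum, ← Finset.sum_add_distrib, ← Finset.sum_add_distrib]
    exact Finset.sum_le_sum fun i _ => queueUpdate_sq_le (hq i) ht (hx i)
  rw [quadraticLyapunov, quadraticLyapunov]
  linarith

lemma half_sum_sq_le_driftConstant_mul {c x : ι → ℝ} {Tmin Tmax t : ℝ} (hTmin : 0 < Tmin)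
    (ht : t ∈ Set.Icc Tmin Tmax) (hx : ∀ i, x i ∈ Set.Icc 0 (c i)) :
    (∑ i, (t ^ 2 + x i ^ 2)) / 2 ≤ driftConstant c Tmin Tmax * t := by
  have ht0 : 0 ≤ t := hTmin.le.trans ht.1
  have hduration : t ^ 2 ≤ Tmax * t := by
    rw [sq]
    exact mul_le_mul_of_nonneg_right ht.2 ht0
  have harrival : ∑ i, x i ^ 2 ≤ (∑ i, c i ^ 2) * (t / Tmin) :=
    calc ∑ i, x i ^ 2
        ≤ ∑ i, c i ^ 2 := Finset.sum_le_sum fun i _ => pow_le_pow_left₀ (hx i).1 (hx i).2 2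
      _ ≤ (∑ i, c i ^ 2) * (t / Tmin) :=
          le_mul_of_one_le_right (Finset.sum_nonneg fun i _ => sq_nonneg (c i))
            ((one_le_div hTmin).2 ht.1)
  calc (∑ i, (t ^ 2 + x i ^ 2)) / 2
      = (Fintype.card ι * t ^ 2 + ∑ i, x i ^ 2) / 2 := by
        rw [Finset.sum_add_distrib, Finset.sum_const, Finset.card_univ, nsmul_eq_mul]
    _ ≤ (Fintype.card ι * (Tmax * t) + (∑ i, c i ^ 2) * (t / Tmin)) / 2 := by gcongr
    _ = driftConstant c Tmin Tmax * t := by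
        rw [driftConstant]
        field_simp
        ring

lemma quadraticLyapunov_queueUpdate_sub_le_of_drift_plus_penalty {q x c : ι → ℝ}
    {t Tmin Tmax V r ρ : ℝ} (hTmin : 0 < Tmin) (ht : t ∈ Set.Icc Tmin Tmax)
    (hq : ∀ i, 0 ≤ q i) (hx : ∀ i, x i ∈ Set.Icc 0 (c i))
    (hslot : (∑ i, q i * (x i - t) - V * r) / t ≤ -V * ρ) :
    quadraticLyapunov (fun i => queueUpdate (q i) t (x i)) - quadraticLyapunov q ≤
      (driftConstant c Tmin Tmax - V * ρ) * t + V * r := by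
  have ht0 : 0 < t := hTmin.trans_le ht.1
  have hdrift := quadraticLyapunov_queueUpdate_sub_le hq ht0.le fun i => (hx i).1
  have hsecond := half_sum_sq_le_driftConstant_mul hTmin ht hx
  have hlinear := (div_le_iff₀ ht0).1 hslot
  linarith

theorem bones_performance_bound_general {Q x : ℕ → ι → ℝ} {T r : ℕ → ℝ} {c : ι → ℝ}
    {Tmin Tmax V ρ : ℝ} (hTmin : 0 < Tmin) (hV : 0 < V) (hQ0 : ∀ i, 0 ≤ Q 0 i)
    (hQrec : ∀ k i, Q (k + 1) i = queueUpdate (Q k i) (T k) (x k i))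
    (hx : ∀ k i, x k i ∈ Set.Icc 0 (c i)) (hT : ∀ k, T k ∈ Set.Icc Tmin Tmax)
    (hslot : ∀ k, (∑ i, Q k i * (x k i - T k) - V * r k) / T k ≤ -V * ρ)
    {K : ℕ} (hK : 1 ≤ K) :
    ρ - driftConstant c Tmin Tmax / V
        - quadraticLyapunov (Q 0) / (V * ∑ k ∈ Finset.range K, T k) ≤
      (∑ k ∈ Finset.range K, r k) / ∑ k ∈ Finset.range K, T k := by
  have hQ : ∀ k i, 0 ≤ Q k i := fun k i =>
    queue_nonneg (Q := (Q · i)) (hQ0 i) (hQrec · i) (fun k => (hx k i).1) k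
  have hdrift : ∀ k, quadraticLyapunov (Q (k + 1)) - quadraticLyapunov (Q k) ≤
      (driftConstant c Tmin Tmax - V * ρ) * T k + V * r k := fun k => by
    rw [funext (hQrec k)]
    exact quadraticLyapunov_queueUpdate_sub_le_of_drift_plus_penalty hTmin (hT k) (hQ k) (hx k)
      (hslot k)
  have htotal := Finset.sum_le_sum fun k (_ : k ∈ Finset.range K) => hdrift k
  rw [Finset.sum_range_sub fun k => quadraticLyapunov (Q k), Finset.sum_add_distrib,
    ← Finset.mul_sum, ← Finset.mul_sum] at htotal
  have hduration : 0 < ∑ k ∈ Finset.range K, T k :=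
    Finset.sum_pos (fun k _ => hTmin.trans_le (hT k).1)
      (Finset.nonempty_range_iff.2 (Nat.one_le_iff_ne_zero.1 hK))
  exact sub_div_sub_div_le_div hV hduration (by linarith [quadraticLyapunov_nonneg (Q K)])

end Queues

open Finset in
/-- deterministic sample-path form of Theorem 2 of the paper: if in every slot
the normalized drift-plus-penalty of the chosen decision is at most `-V·(ū* + γ·s̄*)`, then
the time-average utility-plus-smoothness reward is at least `ū* + γ·s̄* - B/V`, with
`B = (p^2 + (t^e_max)^2 + 2·T_min·T_max) / (2·T_min)`. -/
theorem bones_performance_bound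
    (p teMax Tmin Tmax V γ ustar sstar B : ℝ)
    (T a b u Qd Qe : ℕ → ℝ)
    (hp : 0 < p) (hteMax : 0 ≤ teMax)
    (hTmin : 0 < Tmin) (hTminmax : Tmin ≤ Tmax)
    (hV : 0 < V) (hγ : 0 ≤ γ)
    (hB : B = (p ^ 2 + teMax ^ 2 + 2 * Tmin * Tmax) / (2 * Tmin))
    (hQd0 : Qd 0 = 0) (hQe0 : Qe 0 = 0)
    (hQdrec : ∀ k, Qd (k + 1) = max (Qd k - T k) 0 + a k)
    (hQerec : ∀ k, Qe (k + 1) = max (Qe k - T k) 0 + b k)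
    (ha : ∀ k, 0 ≤ a k ∧ a k ≤ p)
    (hb : ∀ k, 0 ≤ b k ∧ b k ≤ teMax)
    (hT : ∀ k, Tmin ≤ T k ∧ T k ≤ Tmax)
    (hslot : ∀ k,
      (Qd k * (a k - T k) + Qe k * (b k - T k) - V * (u k + γ * a k)) / T k
        ≤ -V * (ustar + γ * sstar)) :
    ∀ K : ℕ, 1 ≤ K →
      (∑ k ∈ range K, (u k + γ * a k)) / (∑ k ∈ range K, T k)
        ≥ ustar + γ * sstar - B / V := by
  intro K hK
  have hbound := bones_performance_bound_general (ι := Fin 2) (Q := fun k => ![Qd k, Qe k])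
    (x := fun k => ![a k, b k]) (T := T) (r := fun k => u k + γ * a k) (c := ![p, teMax])
    (ρ := ustar + γ * sstar) hTmin hV (Fin.forall_fin_two.2 ⟨hQd0.ge, hQe0.ge⟩)
    (fun k => Fin.forall_fin_two.2 ⟨hQdrec k, hQerec k⟩)
    (fun k => Fin.forall_fin_two.2 ⟨ha k, hb k⟩) hT
    (fun k => by simpa [Fin.sum_univ_two] using hslot k) hK
  simpa [hB, driftConstant, quadraticLyapunov, Fin.sum_univ_two, hQd0, hQe0] using hbound
end
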